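/- Let h_∞ > 0 be a constant, let h > 0 and ū be smooth on [0,T] × ℝ² satisfying the full 2D Serre–Green–Naghdi system (mass equation h_t + ∇·(h ū) = 0 and momentum equations ∂_t(h ū_i) + Σ_{j=1,2} ∂_j(h ū_i ū_j + p δ_{ij}) = 0, i = 1,2, with p = g h²/2 + (h²/3) ḧ), and suppose there is a compact set K ⊂ ℝ² such that for every t ∈ [0,T] the functions x ↦ h(t,x) − h_∞ and x ↦ ū(t,x) are supported in K. Then, with σ = (h²/3) ḣ, the total energy ℰ(t) = ∬_{ℝ²} ( h|ū|²/2 + 3σ²/(2h³) + g(h − h_∞)²/2 ) dx dy is constant in t on [0,T]. -/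

import Mathlib

open MeasureTheory

noncomputable section

/-- Partial derivative in the time variable of a function of `(t, x, y)`. -/
def pT (f : ℝ → ℝ → ℝ → ℝ) : ℝ → ℝ → ℝ → ℝ := fun t x y => deriv (fun s => f s x y) t

/-- Partial derivative in the first space variable of a function of `(t, x, y)`. -/
def pX (f : ℝ → ℝ → ℝ → ℝ) : ℝ → ℝ → ℝ → ℝ := fun t x y => deriv (fun s => f t s y) x

/-- Partial derivative in the second space variable of a function of `(t, x, y)`. -/
def pY (f : ℝ → ℝ → ℝ → ℝ) : ℝ → ℝ → ℝ → ℝ := fun t x y => deriv (fun s => f t x s) y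

/-- Smoothness of a function of `(t, x, y)` on `[0,T] × ℝ²`. -/
def Smooth3On (f : ℝ → ℝ → ℝ → ℝ) (T : ℝ) : Prop :=
  ContDiffOn ℝ (⊤ : ℕ∞) (fun q : ℝ × ℝ × ℝ => f q.1 q.2.1 q.2.2)
    (Set.Icc 0 T ×ˢ (Set.univ : Set (ℝ × ℝ)))

/-! Write `q = p - g h_∞²/2` and `e` for the energy density, whose second term is `h ḣ²/6`. Mass
conservation is `ḣ = -h ∇·ū`, and it turns the momentum equations into `h (ū)˙ = -∇p`.
Differentiating `e` along the flow and replacing `ḣ` gives `ė = h ū·(ū)˙ - (e + q) ∇·ū`, which is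
the local law `e_t + ∇·((e + q) ū) = 0`. Its flux has compact support, so `∬ e` has zero derivative
on the open time interval, and it is continuous up to the endpoints. -/

section ConservedIntegrals

open Set Function

variable {X E G : Type*} [NormedAddCommGroup G] [NormedSpace ℝ G]

theorem hasDerivAt_integral_of_compact_support [TopologicalSpace X] [T2Space X]
    [MeasurableSpace X] [OpensMeasurableSpace X] {μ : Measure X} [IsFiniteMeasureOnCompacts μ]
    {f f' : ℝ → X → G} {s : Set ℝ} {K : Set X} (hs : IsOpen s) (hK : IsCompact K)
    (hf : ContinuousOn (uncurry f) (s ×ˢ univ)) (hf' : ContinuousOn (uncurry f') (s ×ˢ univ))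
    (hderiv : ∀ t ∈ s, ∀ x, HasDerivAt (fun r => f r x) (f' t x) t)
    (hfK : ∀ t ∈ s, ∀ x ∉ K, f t x = 0) {t : ℝ} (ht : t ∈ s) :
    HasDerivAt (fun r => ∫ x, f r x ∂μ) (∫ x, f' t x ∂μ) t := by
  have hf'K : ∀ t ∈ s, ∀ x ∉ K, f' t x = 0 := fun t ht x hx =>
    (hderiv t ht x).unique <| (hasDerivAt_const t 0).congr_of_eventuallyEq <|
      Filter.mem_of_superset (hs.mem_nhds ht) fun r hr => hfK r hr x hx
  have integrable_slice {k : ℝ → X → G} (hk : ContinuousOn (uncurry k) (s ×ˢ univ))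
      (hkK : ∀ t ∈ s, ∀ x ∉ K, k t x = 0) {r : ℝ} (hr : r ∈ s) : Integrable (k r) μ :=
    Continuous.integrable_of_hasCompactSupport
      (hk.comp_continuous (Continuous.prodMk_right r) fun _ => ⟨hr, trivial⟩)
      (.intro hK (hkK r hr))
  obtain ⟨ε, hε, hεs⟩ := Metric.nhds_basis_closedBall.mem_iff.1 (hs.mem_nhds ht)
  obtain ⟨C, hC⟩ := ((isCompact_closedBall t ε).prod hK).exists_bound_of_continuousOn
    (hf'.mono (prod_mono hεs (subset_univ _)))
  refine (hasDerivAt_integral_of_dominated_loc_of_deriv_le (bound := K.indicator fun _ => C)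
    (Metric.closedBall_mem_nhds t hε)
    (Filter.mem_of_superset (hs.mem_nhds ht) fun r hr =>
      (integrable_slice hf hfK hr).aestronglyMeasurable)
    (integrable_slice hf hfK ht) (integrable_slice hf' hf'K ht).aestronglyMeasurable
    (.of_forall fun x r hr => ?_)
    ((integrable_indicator_iff hK.measurableSet).2 (integrableOn_const hK.measure_ne_top))
    (.of_forall fun x r hr => hderiv r (hεs hr) x)).2
  by_cases hx : x ∈ K
  · simpa only [indicator_of_mem hx, uncurry_apply_pair] using hC (r, x) ⟨hr, hx⟩
  · simp only [indicator_of_notMem hx, hf'K r (hεs hr) x hx, norm_zero, le_refl]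

theorem eq_of_hasDerivAt_zero_of_mem_Icc [CompleteSpace G] {φ : ℝ → G} {a b : ℝ}
    (hφ : ContinuousOn φ (Icc a b)) (hderiv : ∀ t ∈ Ioo a b, HasDerivAt φ 0 t)
    {t : ℝ} (ht : t ∈ Icc a b) : φ t = φ a := by
  have hFTC := intervalIntegral.integral_eq_sub_of_hasDerivAt_of_le ht.1
    (hφ.mono (Icc_subset_Icc_right ht.2)) (fun r hr => hderiv r ⟨hr.1, hr.2.trans_le ht.2⟩)
    intervalIntegrable_const
  rwa [intervalIntegral.integral_zero, eq_comm, sub_eq_zero] at hFTC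

variable [NormedAddCommGroup E] [NormedSpace ℝ E] [MeasurableSpace E] {μ : Measure E} {f : E → G}

theorem integrable_fderiv_apply [OpensMeasurableSpace E] [IsFiniteMeasureOnCompacts μ]
    (hf : ContDiff ℝ 1 f) (hsupp : HasCompactSupport f) (v : E) :
    Integrable (fun x => fderiv ℝ f x v) μ :=
  ((hf.continuous_fderiv one_ne_zero).clm_apply continuous_const).integrable_of_hasCompactSupport
    (hsupp.fderiv_apply (𝕜 := ℝ) v)

theorem integral_fderiv_apply_eq_zero [FiniteDimensional ℝ E] [BorelSpace E]
    [μ.IsAddHaarMeasure] (hf : ContDiff ℝ 1 f) (hsupp : HasCompactSupport f) (v : E) :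
    ∫ x, fderiv ℝ f x v ∂μ = 0 := by
  simpa using integral_smul_fderiv_eq_neg_fderiv_smul_of_integrable (μ := μ)
    (f := fun _ : E => (1 : ℝ)) (g := f) (v := v) (by simp)
    (by simpa using integrable_fderiv_apply hf hsupp v)
    (by simpa using hf.continuous.integrable_of_hasCompactSupport hsupp)
    (fun _ _ => differentiableAt_const _) (fun x _ => hf.differentiable one_ne_zero x)

end ConservedIntegrals

section PartialDerivatives

open Set Function

variable {f k : ℝ → ℝ → ℝ → ℝ} {I : Set ℝ} {t x y : ℝ} {m n : WithTop ℕ∞}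

/-- The space-time slab `I × ℝ²` over a set `I` of times. -/
abbrev slab (I : Set ℝ) : Set (ℝ × ℝ × ℝ) := I ×ˢ univ

theorem hasFDerivAt_slice {L : ℝ × ℝ × ℝ →L[ℝ] ℝ}
    (hf : HasFDerivWithinAt ↿f L (slab I) (t, x, y)) (ht : t ∈ I) :
    HasFDerivAt ↿(f t) (L ∘L .inr ℝ ℝ (ℝ × ℝ)) (x, y) :=
  hf.comp_hasFDerivAt (f := fun q : ℝ × ℝ => (t, q)) (x, y)
    (hasFDerivAt_prodMk_right t (x, y)) (.of_forall fun _ => ⟨ht, trivial⟩)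

theorem differentiableAt_slice (hf : DifferentiableAt ℝ ↿f (t, x, y)) :
    DifferentiableAt ℝ ↿(f t) (x, y) :=
  (hasFDerivAt_slice (I := univ) hf.hasFDerivAt.hasFDerivWithinAt trivial).differentiableAt

theorem contDiff_slice (hf : ContDiffOn ℝ n ↿f (slab I)) (ht : t ∈ I) :
    ContDiff ℝ n ↿(f t) :=
  hf.comp_contDiff (contDiff_prodMk_right t) fun _ => ⟨ht, trivial⟩

theorem differentiableAt_of_contDiffOn_slab (hf : ContDiffOn ℝ n ↿f (slab I)) (hI : IsOpen I)
    (ht : t ∈ I) (hn : n ≠ 0) : DifferentiableAt ℝ ↿f (t, x, y) :=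
  (hf.differentiableOn hn).differentiableAt ((hI.prod isOpen_univ).mem_nhds ⟨ht, trivial⟩)

theorem hasDerivAt_pX (hf : DifferentiableAt ℝ ↿(f t) (x, y)) :
    HasDerivAt (fun s => f t s y) (pX f t x y) x :=
  (hf.comp (f := fun s => (s, y)) x (by fun_prop)).hasDerivAt

theorem hasDerivAt_pY (hf : DifferentiableAt ℝ ↿(f t) (x, y)) :
    HasDerivAt (fun s => f t x s) (pY f t x y) y :=
  (hf.comp (f := fun s => (x, s)) y (by fun_prop)).hasDerivAt

theorem hasDerivAt_pT (hf : DifferentiableAt ℝ ↿f (t, x, y)) :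
    HasDerivAt (fun s => f s x y) (pT f t x y) t :=
  (hf.comp (f := fun s => (s, x, y)) t (by fun_prop)).hasDerivAt

theorem pX_eq_fderiv (hf : DifferentiableAt ℝ ↿(f t) (x, y)) :
    pX f t x y = fderiv ℝ ↿(f t) (x, y) (1, 0) :=
  (hf.hasFDerivAt.comp_hasDerivAt (f := fun s => (s, y)) x
    ((hasDerivAt_id x).prodMk (hasDerivAt_const x y))).deriv

theorem pY_eq_fderiv (hf : DifferentiableAt ℝ ↿(f t) (x, y)) :
    pY f t x y = fderiv ℝ ↿(f t) (x, y) (0, 1) :=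
  (hf.hasFDerivAt.comp_hasDerivAt (f := fun s => (x, s)) y
    ((hasDerivAt_const y x).prodMk (hasDerivAt_id y))).deriv

theorem pT_eq_fderiv (hf : DifferentiableAt ℝ ↿f (t, x, y)) :
    pT f t x y = fderiv ℝ ↿f (t, x, y) (1, 0, 0) :=
  (hf.hasFDerivAt.comp_hasDerivAt (f := fun s => (s, x, y)) t
    ((hasDerivAt_id t).prodMk (hasDerivAt_const t (x, y)))).deriv

theorem pX_add (hf : DifferentiableAt ℝ ↿(f t) (x, y)) (hk : DifferentiableAt ℝ ↿(k t) (x, y)) :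
    pX (f + k) t x y = pX f t x y + pX k t x y :=
  ((hasDerivAt_pX hf).add (hasDerivAt_pX hk)).deriv

theorem pY_add (hf : DifferentiableAt ℝ ↿(f t) (x, y)) (hk : DifferentiableAt ℝ ↿(k t) (x, y)) :
    pY (f + k) t x y = pY f t x y + pY k t x y :=
  ((hasDerivAt_pY hf).add (hasDerivAt_pY hk)).deriv

theorem pX_mul (hf : DifferentiableAt ℝ ↿(f t) (x, y)) (hk : DifferentiableAt ℝ ↿(k t) (x, y)) :
    pX (f * k) t x y = pX f t x y * k t x y + f t x y * pX k t x y :=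
  ((hasDerivAt_pX hf).mul (hasDerivAt_pX hk)).deriv

theorem pY_mul (hf : DifferentiableAt ℝ ↿(f t) (x, y)) (hk : DifferentiableAt ℝ ↿(k t) (x, y)) :
    pY (f * k) t x y = pY f t x y * k t x y + f t x y * pY k t x y :=
  ((hasDerivAt_pY hf).mul (hasDerivAt_pY hk)).deriv

theorem contDiffOn_pX (hf : ContDiffOn ℝ n ↿f (slab I)) (hI : UniqueDiffOn ℝ I)
    (hmn : m + 1 ≤ n) : ContDiffOn ℝ m ↿(pX f) (slab I) := by
  refine ((hf.fderivWithin (hI.prod uniqueDiffOn_univ) hmn).clm_apply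
    (contDiffOn_const (c := (0, 1, 0)))).congr fun q hq => ?_
  have hslice := hasFDerivAt_slice
    (hf.differentiableOn (by rintro rfl; simp at hmn) q hq).hasFDerivWithinAt hq.1
  exact (pX_eq_fderiv hslice.differentiableAt).trans (DFunLike.congr_fun hslice.fderiv (1, 0))

theorem contDiffOn_pY (hf : ContDiffOn ℝ n ↿f (slab I)) (hI : UniqueDiffOn ℝ I)
    (hmn : m + 1 ≤ n) : ContDiffOn ℝ m ↿(pY f) (slab I) := by
  refine ((hf.fderivWithin (hI.prod uniqueDiffOn_univ) hmn).clm_apply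
    (contDiffOn_const (c := (0, 0, 1)))).congr fun q hq => ?_
  have hslice := hasFDerivAt_slice
    (hf.differentiableOn (by rintro rfl; simp at hmn) q hq).hasFDerivWithinAt hq.1
  exact (pY_eq_fderiv hslice.differentiableAt).trans (DFunLike.congr_fun hslice.fderiv (0, 1))

theorem contDiffOn_pT (hf : ContDiffOn ℝ n ↿f (slab I)) (hI : IsOpen I)
    (hmn : m + 1 ≤ n) : ContDiffOn ℝ m ↿(pT f) (slab I) := by
  refine ((hf.fderiv_of_isOpen (hI.prod isOpen_univ) hmn).clm_apply
    (contDiffOn_const (c := (1, 0, 0)))).congr fun q hq => ?_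
  exact pT_eq_fderiv
    (differentiableAt_of_contDiffOn_slab hf hI hq.1 (by rintro rfl; simp at hmn))

theorem pX_eq_zero_of_notMem_tsupport (hxy : (x, y) ∉ tsupport ↿(f t)) : pX f t x y = 0 := by
  have hzero : HasFDerivAt ↿(f t) (0 : ℝ × ℝ →L[ℝ] ℝ) (x, y) :=
    (hasFDerivAt_const 0 _).congr_of_eventuallyEq (notMem_tsupport_iff_eventuallyEq.1 hxy)
  rw [pX_eq_fderiv hzero.differentiableAt, hzero.fderiv, zero_apply]

theorem pY_eq_zero_of_notMem_tsupport (hxy : (x, y) ∉ tsupport ↿(f t)) : pY f t x y = 0 := by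
  have hzero : HasFDerivAt ↿(f t) (0 : ℝ × ℝ →L[ℝ] ℝ) (x, y) :=
    (hasFDerivAt_const 0 _).congr_of_eventuallyEq (notMem_tsupport_iff_eventuallyEq.1 hxy)
  rw [pY_eq_fderiv hzero.differentiableAt, hzero.fderiv, zero_apply]

theorem integral_pX_add_pY_eq_zero (hf : ContDiff ℝ 1 ↿(f t)) (hfc : HasCompactSupport ↿(f t))
    (hk : ContDiff ℝ 1 ↿(k t)) (hkc : HasCompactSupport ↿(k t)) :
    ∫ q : ℝ × ℝ, (pX f t q.1 q.2 + pY k t q.1 q.2) = 0 := by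
  simp_rw [fun q : ℝ × ℝ => pX_eq_fderiv (hf.differentiable one_ne_zero q),
    fun q : ℝ × ℝ => pY_eq_fderiv (hk.differentiable one_ne_zero q)]
  rw [integral_add (integrable_fderiv_apply hf hfc _) (integrable_fderiv_apply hk hkc _),
    integral_fderiv_apply_eq_zero hf hfc, integral_fderiv_apply_eq_zero hk hkc, add_zero]

theorem integral_eq_of_conservation_law {e F G : ℝ → ℝ → ℝ → ℝ} {a b : ℝ} {K : Set (ℝ × ℝ)}
    (hK : IsCompact K) (he : ContDiffOn ℝ 1 ↿e (slab (Icc a b)))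
    (hF : ContDiffOn ℝ 1 ↿F (slab (Ioo a b))) (hG : ContDiffOn ℝ 1 ↿G (slab (Ioo a b)))
    (heK : ∀ t ∈ Icc a b, support ↿(e t) ⊆ K) (hFK : ∀ t ∈ Ioo a b, support ↿(F t) ⊆ K)
    (hGK : ∀ t ∈ Ioo a b, support ↿(G t) ⊆ K)
    (hlaw : ∀ t ∈ Ioo a b, ∀ x y, pT e t x y + pX F t x y + pY G t x y = 0) :
    ∀ t₁ ∈ Icc a b, ∀ t₂ ∈ Icc a b,
      ∫ q : ℝ × ℝ, e t₁ q.1 q.2 = ∫ q : ℝ × ℝ, e t₂ q.1 q.2 := by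
  have he' : ContDiffOn ℝ 1 ↿e (slab (Ioo a b)) := he.mono (prod_mono_left Ioo_subset_Icc_self)
  have he_zero : ∀ t ∈ Icc a b, ∀ q ∉ K, e t q.1 q.2 = 0 := fun t ht q hq =>
    notMem_support.1 fun hsupp => hq (heK t ht hsupp)
  have integral_pT : ∀ t ∈ Ioo a b, ∫ q : ℝ × ℝ, pT e t q.1 q.2 = 0 := fun t ht => by
    have hdiv := integral_pX_add_pY_eq_zero
      (contDiff_slice hF ht) (.of_support_subset_isCompact hK (hFK t ht))
      (contDiff_slice hG ht) (.of_support_subset_isCompact hK (hGK t ht))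
    have hpT (q : ℝ × ℝ) : pT e t q.1 q.2 = -(pX F t q.1 q.2 + pY G t q.1 q.2) := by
      linear_combination hlaw t ht q.1 q.2
    simp_rw [hpT, integral_neg, hdiv, neg_zero]
  have hderiv : ∀ t ∈ Ioo a b, HasDerivAt (fun t => ∫ q : ℝ × ℝ, e t q.1 q.2) 0 t := by
    intro t ht
    rw [← integral_pT t ht]
    exact hasDerivAt_integral_of_compact_support (f := fun t => ↿(e t))
      (f' := fun t => ↿(pT e t)) isOpen_Ioo hK he'.continuousOn
      (contDiffOn_pT (m := 0) he' isOpen_Ioo (zero_add 1).le).continuousOn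
      (fun r hr q => hasDerivAt_pT
        (differentiableAt_of_contDiffOn_slab he' isOpen_Ioo hr one_ne_zero))
      (fun r hr => he_zero r (Ioo_subset_Icc_self hr)) ht
  have hcont : ContinuousOn (fun t => ∫ q : ℝ × ℝ, e t q.1 q.2) (Icc a b) :=
    continuousOn_integral_of_compact_support (f := fun t => ↿(e t)) hK he.continuousOn
      fun t q ht hq => he_zero t ht q hq
  exact fun t₁ h₁ t₂ h₂ => (eq_of_hasDerivAt_zero_of_mem_Icc hcont hderiv h₁).trans
    (eq_of_hasDerivAt_zero_of_mem_Icc hcont hderiv h₂).symm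

end PartialDerivatives

section Transport

open Function

variable {f k u1 u2 : ℝ → ℝ → ℝ → ℝ} {I : Set ℝ} {t x y : ℝ} {m n : WithTop ℕ∞}

/-- The material derivative `ḟ = f_t + ū·∇f` along the velocity field `ū = (u1, u2)`. -/
def materialDeriv (u1 u2 f : ℝ → ℝ → ℝ → ℝ) : ℝ → ℝ → ℝ → ℝ :=
  pT f + u1 * pX f + u2 * pY f

/-- The spatial divergence `∇·ū` of the velocity field `ū = (u1, u2)`. -/
def velocityDiv (u1 u2 : ℝ → ℝ → ℝ → ℝ) : ℝ → ℝ → ℝ → ℝ :=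
  pX u1 + pY u2

theorem contDiffOn_materialDeriv (hI : IsOpen I)
    (hf : ContDiffOn ℝ n ↿f (slab I)) (hu1 : ContDiffOn ℝ m ↿u1 (slab I))
    (hu2 : ContDiffOn ℝ m ↿u2 (slab I)) (hmn : m + 1 ≤ n) :
    ContDiffOn ℝ m ↿(materialDeriv u1 u2 f) (slab I) :=
  ((contDiffOn_pT hf hI hmn).add (hu1.mul (contDiffOn_pX hf hI.uniqueDiffOn hmn))).add
    (hu2.mul (contDiffOn_pY hf hI.uniqueDiffOn hmn))

theorem hasDerivAt_materialDeriv (hf : DifferentiableAt ℝ ↿f (t, x, y)) :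
    HasDerivAt (fun s => f (t + s) (x + s * u1 t x y) (y + s * u2 t x y))
      (materialDeriv u1 u2 f t x y) 0 := by
  have hslice := hasFDerivAt_slice (I := Set.univ) hf.hasFDerivAt.hasFDerivWithinAt trivial
  have hline (c v : ℝ) : HasDerivAt (fun s => c + s * v) v 0 := by
    simpa using ((hasDerivAt_id (0 : ℝ)).mul_const v).const_add c
  have hdir : ((1, u1 t x y, u2 t x y) : ℝ × ℝ × ℝ)
      = (1, 0, 0) + u1 t x y • (0, 1, 0) + u2 t x y • (0, 0, 1) := by simp
  refine (hf.hasFDerivAt.comp_hasDerivAt_of_eq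
    (f := fun s => (t + s, x + s * u1 t x y, y + s * u2 t x y)) 0
    (((hasDerivAt_id (0 : ℝ)).const_add t).prodMk
      ((hline x (u1 t x y)).prodMk (hline y (u2 t x y)))) (by simp)).congr_deriv ?_
  rw [hdir, map_add, map_add, map_smul, map_smul]
  simp only [materialDeriv, Pi.add_apply, Pi.mul_apply, pT_eq_fderiv hf,
    pX_eq_fderiv hslice.differentiableAt, pY_eq_fderiv hslice.differentiableAt, hslice.fderiv]
  rfl

theorem materialDeriv_mul (hf : DifferentiableAt ℝ ↿f (t, x, y))
    (hk : DifferentiableAt ℝ ↿k (t, x, y)) :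
    materialDeriv u1 u2 (f * k) t x y
      = materialDeriv u1 u2 f t x y * k t x y + f t x y * materialDeriv u1 u2 k t x y := by
  have hfk : DifferentiableAt ℝ ↿(f * k) (t, x, y) := hf.mul hk
  simpa using (hasDerivAt_materialDeriv hfk).unique
    ((hasDerivAt_materialDeriv hf).mul (hasDerivAt_materialDeriv hk))

theorem pT_add_pX_mul_add_pY_mul (hf : DifferentiableAt ℝ ↿(f t) (x, y))
    (hu1 : DifferentiableAt ℝ ↿(u1 t) (x, y)) (hu2 : DifferentiableAt ℝ ↿(u2 t) (x, y)) :
    pT f t x y + pX (f * u1) t x y + pY (f * u2) t x y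
      = materialDeriv u1 u2 f t x y + f t x y * velocityDiv u1 u2 t x y := by
  rw [pX_mul hf hu1, pY_mul hf hu2]
  simp only [materialDeriv, velocityDiv, Pi.add_apply, Pi.mul_apply]
  ring

end Transport

section SerreGreenNaghdi

open Set Function

variable {g hinf : ℝ} {h u1 u2 f : ℝ → ℝ → ℝ → ℝ} {I : Set ℝ} {K : Set (ℝ × ℝ)} {t x y : ℝ}

/-- The Serre–Green–Naghdi pressure `p = g h²/2 + (h²/3) ḧ`. -/
def sgnPressure (g : ℝ) (h u1 u2 : ℝ → ℝ → ℝ → ℝ) : ℝ → ℝ → ℝ → ℝ := fun t x y =>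
  g * h t x y ^ 2 / 2 + h t x y ^ 2 / 3 * materialDeriv u1 u2 (materialDeriv u1 u2 h) t x y

/-- The pressure `p - g h_∞²/2` in excess of that of the fluid at rest with depth `h_∞`. Unlike
`p`, it vanishes at infinity. -/
def sgnExcessPressure (g hinf : ℝ) (h u1 u2 : ℝ → ℝ → ℝ → ℝ) : ℝ → ℝ → ℝ → ℝ := fun t x y =>
  sgnPressure g h u1 u2 t x y - g * hinf ^ 2 / 2

/-- The energy density `h |ū|²/2 + 3 σ²/(2 h³) + g (h - h_∞)²/2` with `σ = (h²/3) ḣ`. Its second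
term is written `h ḣ²/6`, which keeps its meaning where `h = 0`. -/
def sgnEnergyDensity (g hinf : ℝ) (h u1 u2 : ℝ → ℝ → ℝ → ℝ) : ℝ → ℝ → ℝ → ℝ := fun t x y =>
  h t x y * (u1 t x y ^ 2 + u2 t x y ^ 2) / 2 + h t x y * materialDeriv u1 u2 h t x y ^ 2 / 6
    + g * (h t x y - hinf) ^ 2 / 2

/-- Classical solutions `(h, ū)` of the Serre–Green–Naghdi system in conservative form at the times
in `I`, with the regularity that makes `p` continuously differentiable. The depth may take any real
value. -/
structure IsSGNSolutionOn (g : ℝ) (h u1 u2 : ℝ → ℝ → ℝ → ℝ) (I : Set ℝ) : Prop where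
  contDiffOn_depth : ContDiffOn ℝ 2 ↿h (slab I)
  contDiffOn_u1 : ContDiffOn ℝ 3 ↿u1 (slab I)
  contDiffOn_u2 : ContDiffOn ℝ 3 ↿u2 (slab I)
  mass : ∀ t ∈ I, ∀ x y, pT h t x y + pX (h * u1) t x y + pY (h * u2) t x y = 0
  momentum_x : ∀ t ∈ I, ∀ x y, pT (h * u1) t x y
    + pX (h * u1 * u1 + sgnPressure g h u1 u2) t x y + pY (h * u1 * u2) t x y = 0
  momentum_y : ∀ t ∈ I, ∀ x y, pT (h * u2) t x y
    + pX (h * u2 * u1) t x y + pY (h * u2 * u2 + sgnPressure g h u1 u2) t x y = 0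

-- Where `h = 0`, the `σ`-term is `0 / 0 = 0` by the convention on division.
theorem sgnEnergyDensity_eq :
    sgnEnergyDensity g hinf h u1 u2 t x y
      = h t x y * (u1 t x y ^ 2 + u2 t x y ^ 2) / 2
        + 3 * (h t x y ^ 2 / 3 * materialDeriv u1 u2 h t x y) ^ 2 / (2 * h t x y ^ 3)
        + g * (h t x y - hinf) ^ 2 / 2 := by
  rw [sgnEnergyDensity]
  field_simp
  ring

namespace IsSGNSolutionOn

theorem mono {J : Set ℝ} (sol : IsSGNSolutionOn g h u1 u2 I) (hJI : J ⊆ I) :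
    IsSGNSolutionOn g h u1 u2 J where
  contDiffOn_depth := sol.contDiffOn_depth.mono (prod_mono_left hJI)
  contDiffOn_u1 := sol.contDiffOn_u1.mono (prod_mono_left hJI)
  contDiffOn_u2 := sol.contDiffOn_u2.mono (prod_mono_left hJI)
  mass t ht := sol.mass t (hJI ht)
  momentum_x t ht := sol.momentum_x t (hJI ht)
  momentum_y t ht := sol.momentum_y t (hJI ht)

theorem materialDeriv_depth (sol : IsSGNSolutionOn g h u1 u2 I) (ht : t ∈ I) :
    materialDeriv u1 u2 h t x y = -(h t x y * velocityDiv u1 u2 t x y) := by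
  rw [eq_neg_iff_add_eq_zero, ← sol.mass t ht x y]
  exact (pT_add_pX_mul_add_pY_mul
    ((contDiff_slice sol.contDiffOn_depth ht).differentiable two_ne_zero _)
    ((contDiff_slice sol.contDiffOn_u1 ht).differentiable three_ne_zero _)
    ((contDiff_slice sol.contDiffOn_u2 ht).differentiable three_ne_zero _)).symm

-- `pT h` is a two-sided derivative, about which regularity of `h` on `slab I` says nothing at an
-- endpoint of `I`; the mass equation expresses `ḣ` there through spatial derivatives.
theorem contDiffOn_materialDeriv_depth (sol : IsSGNSolutionOn g h u1 u2 I)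
    (hI : UniqueDiffOn ℝ I) : ContDiffOn ℝ 2 ↿(materialDeriv u1 u2 h) (slab I) :=
  (sol.contDiffOn_depth.mul ((contDiffOn_pX sol.contDiffOn_u1 hI (by norm_num)).add
    (contDiffOn_pY sol.contDiffOn_u2 hI (by norm_num)))).neg.congr
    fun _ hq => sol.materialDeriv_depth hq.1

theorem contDiffOn_pressure (sol : IsSGNSolutionOn g h u1 u2 I) (hI : IsOpen I) :
    ContDiffOn ℝ 1 ↿(sgnPressure g h u1 u2) (slab I) := by
  have hh := sol.contDiffOn_depth.of_le one_le_two
  have hddot : ContDiffOn ℝ 1 ↿(materialDeriv u1 u2 (materialDeriv u1 u2 h)) (slab I) :=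
    contDiffOn_materialDeriv hI (sol.contDiffOn_materialDeriv_depth hI.uniqueDiffOn)
      (sol.contDiffOn_u1.of_le (by norm_num)) (sol.contDiffOn_u2.of_le (by norm_num))
      (by norm_num)
  exact ((contDiffOn_const.mul (hh.pow 2)).div_const 2).add (((hh.pow 2).div_const 3).mul hddot)

theorem contDiffOn_energyDensity (sol : IsSGNSolutionOn g h u1 u2 I) (hI : UniqueDiffOn ℝ I) :
    ContDiffOn ℝ 1 ↿(sgnEnergyDensity g hinf h u1 u2) (slab I) := by
  have hh := sol.contDiffOn_depth.of_le one_le_two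
  have hu1 := sol.contDiffOn_u1.of_le (m := 1) (by norm_num)
  have hu2 := sol.contDiffOn_u2.of_le (m := 1) (by norm_num)
  have hdot := (sol.contDiffOn_materialDeriv_depth hI).of_le one_le_two
  exact (((hh.mul ((hu1.pow 2).add (hu2.pow 2))).div_const 2).add
    ((hh.mul (hdot.pow 2)).div_const 6)).add
    ((contDiffOn_const.mul ((hh.sub contDiffOn_const).pow 2)).div_const 2)

theorem pT_depth_mul_add_pX_add_pY (sol : IsSGNSolutionOn g h u1 u2 I) (hI : IsOpen I)
    (ht : t ∈ I) (hf : DifferentiableAt ℝ ↿f (t, x, y)) :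
    pT (h * f) t x y + pX (h * f * u1) t x y + pY (h * f * u2) t x y
      = h t x y * materialDeriv u1 u2 f t x y := by
  have hh : DifferentiableAt ℝ ↿h (t, x, y) :=
    differentiableAt_of_contDiffOn_slab sol.contDiffOn_depth hI ht two_ne_zero
  have hu1 := (contDiff_slice sol.contDiffOn_u1 ht).differentiable three_ne_zero (x, y)
  have hu2 := (contDiff_slice sol.contDiffOn_u2 ht).differentiable three_ne_zero (x, y)
  rw [pT_add_pX_mul_add_pY_mul (differentiableAt_slice (hh.mul hf)) hu1 hu2,
    materialDeriv_mul hh hf, sol.materialDeriv_depth ht, Pi.mul_apply, Pi.mul_apply, Pi.mul_apply]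
  ring

theorem depth_mul_materialDeriv_u1 (sol : IsSGNSolutionOn g h u1 u2 I) (hI : IsOpen I)
    (ht : t ∈ I) :
    h t x y * materialDeriv u1 u2 u1 t x y = -pX (sgnPressure g h u1 u2) t x y := by
  have hh := (contDiff_slice sol.contDiffOn_depth ht).differentiable two_ne_zero (x, y)
  have hu1 := (contDiff_slice sol.contDiffOn_u1 ht).differentiable three_ne_zero (x, y)
  have hp := (contDiff_slice (sol.contDiffOn_pressure hI) ht).differentiable one_ne_zero (x, y)
  have hmom := sol.momentum_x t ht x y
  rw [pX_add ((hh.mul hu1).mul hu1) hp] at hmom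
  rw [← sol.pT_depth_mul_add_pX_add_pY hI ht
    (differentiableAt_of_contDiffOn_slab sol.contDiffOn_u1 hI ht three_ne_zero)]
  linear_combination hmom

theorem depth_mul_materialDeriv_u2 (sol : IsSGNSolutionOn g h u1 u2 I) (hI : IsOpen I)
    (ht : t ∈ I) :
    h t x y * materialDeriv u1 u2 u2 t x y = -pY (sgnPressure g h u1 u2) t x y := by
  have hh := (contDiff_slice sol.contDiffOn_depth ht).differentiable two_ne_zero (x, y)
  have hu2 := (contDiff_slice sol.contDiffOn_u2 ht).differentiable three_ne_zero (x, y)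
  have hp := (contDiff_slice (sol.contDiffOn_pressure hI) ht).differentiable one_ne_zero (x, y)
  have hmom := sol.momentum_y t ht x y
  rw [pY_add ((hh.mul hu2).mul hu2) hp] at hmom
  rw [← sol.pT_depth_mul_add_pX_add_pY hI ht
    (differentiableAt_of_contDiffOn_slab sol.contDiffOn_u2 hI ht three_ne_zero)]
  linear_combination hmom

theorem materialDeriv_energyDensity (sol : IsSGNSolutionOn g h u1 u2 I) (hI : IsOpen I)
    (ht : t ∈ I) :
    materialDeriv u1 u2 (sgnEnergyDensity g hinf h u1 u2) t x y
      = materialDeriv u1 u2 h t x y * ((u1 t x y ^ 2 + u2 t x y ^ 2) / 2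
          + materialDeriv u1 u2 h t x y ^ 2 / 6 + g * (h t x y - hinf))
        + h t x y * (u1 t x y * materialDeriv u1 u2 u1 t x y
          + u2 t x y * materialDeriv u1 u2 u2 t x y
          + materialDeriv u1 u2 h t x y
            * materialDeriv u1 u2 (materialDeriv u1 u2 h) t x y / 3) := by
  have along_flow {f : ℝ → ℝ → ℝ → ℝ} {n : WithTop ℕ∞} (hf : ContDiffOn ℝ n ↿f (slab I))
      (hn : n ≠ 0) := hasDerivAt_materialDeriv (u1 := u1) (u2 := u2) (x := x) (y := y)
    (differentiableAt_of_contDiffOn_slab hf hI ht hn)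
  have hh := along_flow sol.contDiffOn_depth two_ne_zero
  have hu1 := along_flow sol.contDiffOn_u1 three_ne_zero
  have hu2 := along_flow sol.contDiffOn_u2 three_ne_zero
  have hdot := along_flow (sol.contDiffOn_materialDeriv_depth hI.uniqueDiffOn) two_ne_zero
  have he := along_flow (sol.contDiffOn_energyDensity (hinf := hinf) hI.uniqueDiffOn) one_ne_zero
  rw [he.unique ((((hh.mul ((hu1.pow 2).add (hu2.pow 2))).div_const 2).add
    ((hh.mul (hdot.pow 2)).div_const 6)).add
    ((((hh.sub_const hinf).pow 2).const_mul g).div_const 2))]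
  simp only [Pi.add_apply, Pi.pow_apply, zero_mul, add_zero]
  ring

theorem materialDeriv_energyDensity_eq_sub (sol : IsSGNSolutionOn g h u1 u2 I) (hI : IsOpen I)
    (ht : t ∈ I) :
    materialDeriv u1 u2 (sgnEnergyDensity g hinf h u1 u2) t x y
      = h t x y * (u1 t x y * materialDeriv u1 u2 u1 t x y
          + u2 t x y * materialDeriv u1 u2 u2 t x y)
        - (sgnEnergyDensity g hinf h u1 u2 t x y + sgnExcessPressure g hinf h u1 u2 t x y)
          * velocityDiv u1 u2 t x y := by
  rw [sol.materialDeriv_energyDensity hI ht]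
  simp only [sgnEnergyDensity, sgnExcessPressure, sgnPressure, sol.materialDeriv_depth ht]
  ring

theorem local_energy_conservation (sol : IsSGNSolutionOn g h u1 u2 I) (hI : IsOpen I) (ht : t ∈ I) :
    pT (sgnEnergyDensity g hinf h u1 u2) t x y
      + pX ((sgnEnergyDensity g hinf h u1 u2 + sgnExcessPressure g hinf h u1 u2) * u1) t x y
      + pY ((sgnEnergyDensity g hinf h u1 u2 + sgnExcessPressure g hinf h u1 u2) * u2) t x y
      = 0 := by
  set e := sgnEnergyDensity g hinf h u1 u2
  set q := sgnExcessPressure g hinf h u1 u2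
  have hu1 := (contDiff_slice sol.contDiffOn_u1 ht).differentiable three_ne_zero (x, y)
  have hu2 := (contDiff_slice sol.contDiffOn_u2 ht).differentiable three_ne_zero (x, y)
  have he : DifferentiableAt ℝ ↿(e t) (x, y) := (contDiff_slice
    (sol.contDiffOn_energyDensity hI.uniqueDiffOn) ht).differentiable one_ne_zero (x, y)
  have hq : DifferentiableAt ℝ ↿(q t) (x, y) := ((contDiff_slice
    (sol.contDiffOn_pressure hI) ht).differentiable one_ne_zero (x, y)).sub_const _
  have pX_q : pX q t x y = -(h t x y * materialDeriv u1 u2 u1 t x y) := by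
    rw [sol.depth_mul_materialDeriv_u1 hI ht, neg_neg]
    exact deriv_sub_const _
  have pY_q : pY q t x y = -(h t x y * materialDeriv u1 u2 u2 t x y) := by
    rw [sol.depth_mul_materialDeriv_u2 hI ht, neg_neg]
    exact deriv_sub_const _
  have transport := pT_add_pX_mul_add_pY_mul he hu1 hu2
  rw [sol.materialDeriv_energyDensity_eq_sub hI ht] at transport
  simp only [velocityDiv, Pi.add_apply] at transport
  rw [add_mul, add_mul, pX_add (he.mul hu1) (hq.mul hu1), pY_add (he.mul hu2) (hq.mul hu2),
    pX_mul hq hu1, pY_mul hq hu2, pX_q, pY_q]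
  linear_combination transport

theorem support_energyDensity_subset (sol : IsSGNSolutionOn g h u1 u2 I) (ht : t ∈ I)
    (hh : support (fun q : ℝ × ℝ => h t q.1 q.2 - hinf) ⊆ K) (hu1 : support ↿(u1 t) ⊆ K)
    (hu2 : support ↿(u2 t) ⊆ K) (hK : IsClosed K) :
    support ↿(sgnEnergyDensity g hinf h u1 u2 t) ⊆ K := by
  rw [support_subset_iff'] at hh ⊢
  rintro ⟨x, y⟩ hxy
  have hdiv : velocityDiv u1 u2 t x y = 0 := by
    simp only [velocityDiv, Pi.add_apply, add_zero,
      pX_eq_zero_of_notMem_tsupport fun hmem => hxy (closure_minimal hu1 hK hmem),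
      pY_eq_zero_of_notMem_tsupport fun hmem => hxy (closure_minimal hu2 hK hmem)]
  have hu1 : u1 t x y = 0 := support_subset_iff'.1 hu1 (x, y) hxy
  have hu2 : u2 t x y = 0 := support_subset_iff'.1 hu2 (x, y) hxy
  have hh : h t x y - hinf = 0 := hh (x, y) hxy
  change sgnEnergyDensity g hinf h u1 u2 t x y = 0
  simp [sgnEnergyDensity, sol.materialDeriv_depth ht, hdiv, hu1, hu2, hh]

end IsSGNSolutionOn

theorem sgn2d_total_energy_conservation_general {a b : ℝ} (hab : a < b)
    (sol : IsSGNSolutionOn g h u1 u2 (Icc a b)) (hK : IsCompact K)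
    (hh : ∀ t ∈ Icc a b, support (fun q : ℝ × ℝ => h t q.1 q.2 - hinf) ⊆ K)
    (hu1 : ∀ t ∈ Icc a b, support ↿(u1 t) ⊆ K) (hu2 : ∀ t ∈ Icc a b, support ↿(u2 t) ⊆ K) :
    ∀ t₁ ∈ Icc a b, ∀ t₂ ∈ Icc a b,
      ∫ q : ℝ × ℝ, sgnEnergyDensity g hinf h u1 u2 t₁ q.1 q.2
        = ∫ q : ℝ × ℝ, sgnEnergyDensity g hinf h u1 u2 t₂ q.1 q.2 := by
  have sol' := sol.mono (Ioo_subset_Icc_self (a := a) (b := b))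
  let w := sgnEnergyDensity g hinf h u1 u2 + sgnExcessPressure g hinf h u1 u2
  have hw : ContDiffOn ℝ 1 ↿w (slab (Ioo a b)) :=
    (sol'.contDiffOn_energyDensity isOpen_Ioo.uniqueDiffOn).add
      ((sol'.contDiffOn_pressure isOpen_Ioo).sub contDiffOn_const)
  exact integral_eq_of_conservation_law (F := w * u1) (G := w * u2) hK
    (sol.contDiffOn_energyDensity (uniqueDiffOn_Icc hab))
    (hw.mul (sol'.contDiffOn_u1.of_le (by norm_num)))
    (hw.mul (sol'.contDiffOn_u2.of_le (by norm_num)))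
    (fun t ht => sol.support_energyDensity_subset ht (hh t ht) (hu1 t ht) (hu2 t ht) hK.isClosed)
    (fun t ht => (support_mul_subset_right ↿(w t) ↿(u1 t)).trans
      (hu1 t (Ioo_subset_Icc_self ht)))
    (fun t ht => (support_mul_subset_right ↿(w t) ↿(u2 t)).trans
      (hu2 t (Ioo_subset_Icc_self ht)))
    (fun t ht x y => sol'.local_energy_conservation isOpen_Ioo ht)

end SerreGreenNaghdi

/-- If smooth `h > 0`, `ū = (u1, u2)` satisfy the full 2D Serre–Green–Naghdi system on
`[0,T] × ℝ²` and `h − h_∞`, `ū` are spatially supported in a fixed compact set `K`,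
then, with `σ = (h²/3)ḣ`, the total energy
`ℰ(t) = ∬ ( h|ū|²/2 + 3σ²/(2h³) + g(h − h_∞)²/2 ) dx dy` is constant on `[0,T]`. -/
theorem sgn2d_total_energy_conservation
    (g hinf T : ℝ) (hg : 0 < g) (hinf_pos : 0 < hinf) (hT : 0 < T)
    (h u1 u2 : ℝ → ℝ → ℝ → ℝ)
    (h_smooth : Smooth3On h T) (u1_smooth : Smooth3On u1 T) (u2_smooth : Smooth3On u2 T)
    (h_pos : ∀ t x y, 0 < h t x y)
    (hdot : ℝ → ℝ → ℝ → ℝ)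
    (hdot_def : hdot = fun t x y =>
      pT h t x y + u1 t x y * pX h t x y + u2 t x y * pY h t x y)
    (hddot : ℝ → ℝ → ℝ → ℝ)
    (hddot_def : hddot = fun t x y =>
      pT hdot t x y + u1 t x y * pX hdot t x y + u2 t x y * pY hdot t x y)
    (p : ℝ → ℝ → ℝ → ℝ)
    (p_def : p = fun t x y => g * (h t x y) ^ 2 / 2 + (h t x y) ^ 2 / 3 * hddot t x y)
    (σ : ℝ → ℝ → ℝ → ℝ)
    (σ_def : σ = fun t x y => (h t x y) ^ 2 / 3 * hdot t x y)
    (K : Set (ℝ × ℝ)) (K_compact : IsCompact K)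
    (h_supp : ∀ t ∈ Set.Icc (0 : ℝ) T,
      Function.support (fun q : ℝ × ℝ => h t q.1 q.2 - hinf) ⊆ K)
    (u1_supp : ∀ t ∈ Set.Icc (0 : ℝ) T,
      Function.support (fun q : ℝ × ℝ => u1 t q.1 q.2) ⊆ K)
    (u2_supp : ∀ t ∈ Set.Icc (0 : ℝ) T,
      Function.support (fun q : ℝ × ℝ => u2 t q.1 q.2) ⊆ K)
    (mass : ∀ t ∈ Set.Icc (0 : ℝ) T, ∀ x y : ℝ,
      pT h t x y + pX (fun t x y => h t x y * u1 t x y) t x y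
        + pY (fun t x y => h t x y * u2 t x y) t x y = 0)
    (mom1 : ∀ t ∈ Set.Icc (0 : ℝ) T, ∀ x y : ℝ,
      pT (fun t x y => h t x y * u1 t x y) t x y
        + pX (fun t x y => h t x y * u1 t x y * u1 t x y + p t x y) t x y
        + pY (fun t x y => h t x y * u1 t x y * u2 t x y) t x y = 0)
    (mom2 : ∀ t ∈ Set.Icc (0 : ℝ) T, ∀ x y : ℝ,
      pT (fun t x y => h t x y * u2 t x y) t x y
        + pX (fun t x y => h t x y * u2 t x y * u1 t x y) t x y
        + pY (fun t x y => h t x y * u2 t x y * u2 t x y + p t x y) t x y = 0) :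
    ∀ t₁ ∈ Set.Icc (0 : ℝ) T, ∀ t₂ ∈ Set.Icc (0 : ℝ) T,
      (∫ q : ℝ × ℝ,
          (h t₁ q.1 q.2 * ((u1 t₁ q.1 q.2) ^ 2 + (u2 t₁ q.1 q.2) ^ 2) / 2
            + 3 * (σ t₁ q.1 q.2) ^ 2 / (2 * (h t₁ q.1 q.2) ^ 3)
            + g * (h t₁ q.1 q.2 - hinf) ^ 2 / 2))
        = ∫ q : ℝ × ℝ,
            (h t₂ q.1 q.2 * ((u1 t₂ q.1 q.2) ^ 2 + (u2 t₂ q.1 q.2) ^ 2) / 2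
              + 3 * (σ t₂ q.1 q.2) ^ 2 / (2 * (h t₂ q.1 q.2) ^ 3)
              + g * (h t₂ q.1 q.2 - hinf) ^ 2 / 2) := by
  subst hdot_def hddot_def p_def σ_def
  have sol : IsSGNSolutionOn g h u1 u2 (Set.Icc 0 T) :=
    ⟨contDiffOn_infty.1 h_smooth 2, contDiffOn_infty.1 u1_smooth 3,
      contDiffOn_infty.1 u2_smooth 3, mass, mom1, mom2⟩
  have conserved :=
    sgn2d_total_energy_conservation_general hT sol K_compact h_supp u1_supp u2_supp
  simp only [sgnEnergyDensity_eq] at conserved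
  exact conserved
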